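/- arXiv:2105.05468 — 5 statements merged into one kernel-verified Lean document; each statement's English description precedes it below -/
import Mathlib

section
/- Let (X, 𝓑, μ) be a probability space equipped with a jointly measurable measure-preserving ℝ-flow (u_s)_{s∈ℝ}. Let φ : X → ℂ be a bounded measurable function, let ξ : ℝ → ℂ be measurable with |ξ(s)| = 1 for all s, and suppose there are constants C ≥ 1, c ∈ (0,1/2), λ > 0 and S ≥ 0 such that for all s ∈ ℝ: |∫_X φ(u_s x)·conj(φ(x)) dμ(x) − |∫_X φ dμ|²| ≤ C·max(1, |s|·λ)^{−c}·S². For L > 0 define φ_L(x) := (1/L)·∫₀^L ξ(s)·(φ(u_s x) − ∫_X φ dμ) ds. Then for every L > 0 with L·λ ≥ 1 one has ∫_X |φ_L|² dμ ≤ 14·C·(L·λ)^{−c}·S². -/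
/-!
Write `f s x = ξ s * (φ (u s x) - m)` with `m = ∫ φ`. Expanding the square and applying Fubini,
`∫ |∫₀ᴸ f s x ds|² dμ = ∫₀ᴸ ∫₀ᴸ (∫ f s x * conj (f t x) dμ) ds dt`. As `μ` is invariant under
`u t`, the inner integral is, up to the unimodular factor `ξ s * conj (ξ t)`, the centred
autocorrelation of `φ` at time `s - t`, so it is at most `C * max 1 (|s - t| * lam) ^ (-c) * S ^ 2`.
For fixed `t` the kernel has integral over `s ∈ (0, L]` at most
`2 * ∫₀ᴸ (r * lam) ^ (-c) dr = 2 * L * (L * lam) ^ (-c) / (1 - c) ≤ 4 * L * (L * lam) ^ (-c)`.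
Integrating over `t` and dividing by `L ^ 2` gives the bound with constant `4 ≤ 14`.
-/

open MeasureTheory

/-- The square of an average, integrated over `x`, is controlled by the two-point correlations
of the family being averaged. -/
lemma integral_norm_sq_average_le {X T : Type*} [MeasurableSpace X] [MeasurableSpace T]
    (μ : Measure X) [IsFiniteMeasure μ] (ν : Measure T) [IsFiniteMeasure ν]
    (f : T → X → ℂ) (hf : Measurable fun q : T × X => f q.1 q.2)
    (K : ℝ) (hK : ∀ s x, ‖f s x‖ ≤ K) (G : T → T → ℝ)
    (hG : Integrable (fun z : T × T => G z.1 z.2) (ν.prod ν))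
    (hfG : ∀ s t, ‖∫ x, f s x * (starRingEnd ℂ) (f t x) ∂μ‖ ≤ G s t) :
    ∫ x, ‖∫ s, f s x ∂ν‖ ^ 2 ∂μ ≤ ∫ t, ∫ s, G s t ∂ν ∂ν := by
  have hsq : ∀ x, ((‖∫ s, f s x ∂ν‖ ^ 2 : ℝ) : ℂ)
      = ∫ z : T × T, f z.1 x * (starRingEnd ℂ) (f z.2 x) ∂(ν.prod ν) := by
    intro x
    rw [integral_prod_mul (fun s => f s x) (fun t => (starRingEnd ℂ) (f t x)), integral_conj,
      Complex.mul_conj, Complex.normSq_eq_norm_sq]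
  have hmeas : Measurable fun p : X × (T × T) =>
      f p.2.1 p.1 * (starRingEnd ℂ) (f p.2.2 p.1) := by
    have h1 : Measurable fun p : X × (T × T) => f p.2.1 p.1 :=
      hf.comp (g := fun q : T × X => f q.1 q.2) (f := fun p : X × (T × T) => (p.2.1, p.1))
        (by fun_prop)
    have h2 : Measurable fun p : X × (T × T) => f p.2.2 p.1 :=
      hf.comp (g := fun q : T × X => f q.1 q.2) (f := fun p : X × (T × T) => (p.2.2, p.1))
        (by fun_prop)
    exact h1.mul (Complex.continuous_conj.measurable.comp h2)
  have hint : Integrable (Function.uncurry fun (x : X) (z : T × T) =>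
      f z.1 x * (starRingEnd ℂ) (f z.2 x)) (μ.prod (ν.prod ν)) := by
    refine Integrable.of_bound (C := K * K) hmeas.aestronglyMeasurable (ae_of_all _ ?_)
    rintro ⟨x, s, t⟩
    simp only [Function.uncurry, norm_mul, RCLike.norm_conj]
    exact mul_le_mul (hK s x) (hK t x) (norm_nonneg _) ((norm_nonneg _).trans (hK s x))
  have key : ((∫ x, ‖∫ s, f s x ∂ν‖ ^ 2 ∂μ : ℝ) : ℂ)
      = ∫ z : T × T, ∫ x, f z.1 x * (starRingEnd ℂ) (f z.2 x) ∂μ ∂(ν.prod ν) := by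
    rw [← integral_integral_swap hint, ← integral_complex_ofReal]
    exact integral_congr_ae (ae_of_all _ hsq)
  have h0 : 0 ≤ ∫ x, ‖∫ s, f s x ∂ν‖ ^ 2 ∂μ := integral_nonneg fun x => by positivity
  calc ∫ x, ‖∫ s, f s x ∂ν‖ ^ 2 ∂μ
      = ‖((∫ x, ‖∫ s, f s x ∂ν‖ ^ 2 ∂μ : ℝ) : ℂ)‖ := by
        rw [Complex.norm_real, Real.norm_of_nonneg h0]
    _ ≤ ∫ z : T × T, G z.1 z.2 ∂(ν.prod ν) := by
        rw [key]
        exact norm_integral_le_of_norm_le hG (ae_of_all _ fun z => hfG z.1 z.2)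
    _ = ∫ t, ∫ s, G s t ∂ν ∂ν := integral_prod_symm _ hG

lemma continuous_decay_kernel (c lam : ℝ) :
    Continuous fun r : ℝ => max 1 (|r| * lam) ^ (-c) := by
  refine Continuous.rpow_const (by fun_prop) fun r => Or.inl ?_
  have : (1 : ℝ) ≤ max 1 (|r| * lam) := le_max_left _ _
  positivity

lemma integral_decay_kernel_le {c lam L t : ℝ} (hc : c ∈ Set.Ioo (0 : ℝ) (1 / 2))
    (hlam : 0 < lam) (hL : 0 < L) (ht : t ∈ Set.Ioc 0 L) :
    ∫ s in (0 : ℝ)..L, max 1 (|s - t| * lam) ^ (-c) ≤ 4 * L * (L * lam) ^ (-c) := by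
  obtain ⟨hc0, hc1⟩ := hc
  obtain ⟨ht0, ht1⟩ := ht
  have hcont := continuous_decay_kernel c lam
  have hii : ∀ a b : ℝ, IntervalIntegrable (fun r : ℝ => max 1 (|r| * lam) ^ (-c)) volume a b :=
    fun a b => hcont.intervalIntegrable a b
  have hnn : ∀ r : ℝ, 0 ≤ max 1 (|r| * lam) ^ (-c) := fun r =>
    Real.rpow_nonneg (zero_le_one.trans (le_max_left _ _)) _
  rw [intervalIntegral.integral_comp_sub_right (fun r : ℝ => max 1 (|r| * lam) ^ (-c)) t]
  have h1 : ∫ r in (0 - t)..(L - t), max 1 (|r| * lam) ^ (-c)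
      ≤ ∫ r in (-L)..L, max 1 (|r| * lam) ^ (-c) :=
    intervalIntegral.integral_mono_interval (by linarith) (by linarith) (by linarith)
      (ae_of_all _ hnn) (hii _ _)
  have h2 : ∫ r in (-L)..L, max 1 (|r| * lam) ^ (-c)
      = 2 * ∫ r in (0 : ℝ)..L, max 1 (|r| * lam) ^ (-c) := by
    rw [← intervalIntegral.integral_add_adjacent_intervals (hii (-L) 0) (hii 0 L)]
    have := intervalIntegral.integral_comp_neg (a := 0) (b := L)
      (fun r : ℝ => max 1 (|r| * lam) ^ (-c))
    simp only [abs_neg, neg_zero] at this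
    rw [← this]; ring
  have h3 : ∫ r in (0 : ℝ)..L, max 1 (|r| * lam) ^ (-c)
      ≤ ∫ r in (0 : ℝ)..L, r ^ (-c) * lam ^ (-c) := by
    -- At `r = 0` the junk value `0 ^ (-c) = 0` breaks the pointwise bound, hence the open interval.
    refine intervalIntegral.integral_mono_on_of_le_Ioo hL.le (hii _ _)
      ((intervalIntegral.intervalIntegrable_rpow' (by linarith)).mul_const _) ?_
    rintro r ⟨hr, -⟩
    rw [← Real.mul_rpow hr.le hlam.le, abs_of_pos hr]
    exact Real.rpow_le_rpow_of_nonpos (by positivity) (le_max_right _ _) (by linarith)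
  have h4 : ∫ r in (0 : ℝ)..L, r ^ (-c) * lam ^ (-c) ≤ 2 * L * (L * lam) ^ (-c) := by
    rw [intervalIntegral.integral_mul_const, integral_rpow (Or.inl (by linarith)),
      Real.zero_rpow (by linarith), Real.rpow_add hL, Real.rpow_one,
      Real.mul_rpow hL.le hlam.le, sub_zero]
    have hA : 0 ≤ L ^ (-c) * L := by positivity
    have hdiv : L ^ (-c) * L / (-c + 1) ≤ 2 * (L ^ (-c) * L) := by
      rw [div_le_iff₀ (by linarith)]
      nlinarith
    calc L ^ (-c) * L / (-c + 1) * lam ^ (-c) ≤ 2 * (L ^ (-c) * L) * lam ^ (-c) := by gcongr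
      _ = 2 * L * (L ^ (-c) * lam ^ (-c)) := by ring
  linarith

/-- By invariance of `μ` under `u t`, the correlation of the centred translates of `φ` at times
`s` and `t` is the centred autocorrelation of `φ` at time `s - t`. -/
lemma correlation_centred_translates {X : Type*} [MeasurableSpace X]
    (μ : Measure X) [IsProbabilityMeasure μ] (u : ℝ → X → X)
    (hu : ∀ s, Measurable (u s)) (hu_add : ∀ s t x, u (s + t) x = u s (u t x))
    (hu_pres : ∀ s, Measure.map (u s) μ = μ)
    (φ : X → ℂ) (hφ_meas : Measurable φ) (K : ℝ) (hK : ∀ x, ‖φ x‖ ≤ K) (s t : ℝ) :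
    ∫ x, (φ (u s x) - ∫ y, φ y ∂μ) * (starRingEnd ℂ) (φ (u t x) - ∫ y, φ y ∂μ) ∂μ
      = (∫ x, φ (u (s - t) x) * (starRingEnd ℂ) (φ x) ∂μ) -
          ((‖∫ x, φ x ∂μ‖ ^ 2 : ℝ) : ℂ) := by
  set m := ∫ y, φ y ∂μ with hm
  have inv : ∀ (r : ℝ) (g : X → ℂ), Measurable g → ∫ x, g (u r x) ∂μ = ∫ x, g x ∂μ := by
    intro r g hg
    have := integral_map (μ := μ) (hu r).aemeasurable (f := g) hg.aestronglyMeasurable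
    rw [hu_pres r] at this
    exact this.symm
  have hconj : Measurable fun x => (starRingEnd ℂ) (φ x) :=
    Complex.continuous_conj.measurable.comp hφ_meas
  have hφr : Measurable fun x => φ (u (s - t) x) := hφ_meas.comp (hu _)
  have hus : ∀ x, u s x = u (s - t) (u t x) := fun x => by rw [← hu_add, sub_add_cancel]
  have hstep : ∫ x, (φ (u s x) - m) * (starRingEnd ℂ) (φ (u t x) - m) ∂μ
      = ∫ x, (φ (u (s - t) x) - m) * (starRingEnd ℂ) (φ x - m) ∂μ := by
    simp_rw [hus]
    refine inv t (fun x => (φ (u (s - t) x) - m) * (starRingEnd ℂ) (φ x - m)) ?_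
    simp only [map_sub]
    exact (hφr.sub_const _).mul (hconj.sub_const _)
  have i1 : Integrable (fun x => φ (u (s - t) x)) μ :=
    Integrable.of_bound hφr.aestronglyMeasurable K (ae_of_all _ fun x => hK _)
  have i2 : Integrable (fun x => (starRingEnd ℂ) (φ x)) μ :=
    Integrable.of_bound hconj.aestronglyMeasurable K
      (ae_of_all _ fun x => by rw [RCLike.norm_conj]; exact hK _)
  have i3 : Integrable (fun x => φ (u (s - t) x) * (starRingEnd ℂ) (φ x)) μ := by
    refine Integrable.of_bound (hφr.mul hconj).aestronglyMeasurable (K * K) (ae_of_all _ fun x => ?_)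
    rw [norm_mul, RCLike.norm_conj]
    exact mul_le_mul (hK _) (hK _) (norm_nonneg _) ((norm_nonneg _).trans (hK x))
  have hexp : ∀ x, (φ (u (s - t) x) - m) * (starRingEnd ℂ) (φ x - m)
      = φ (u (s - t) x) * (starRingEnd ℂ) (φ x) - φ (u (s - t) x) * (starRingEnd ℂ) m
        - (m * (starRingEnd ℂ) (φ x) - m * (starRingEnd ℂ) m) := fun x => by
    rw [map_sub]; ring
  have i4 : Integrable (fun x => φ (u (s - t) x) * (starRingEnd ℂ) (φ x)
      - φ (u (s - t) x) * (starRingEnd ℂ) m) μ := i3.sub (i1.mul_const _)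
  have i5 : Integrable (fun x => m * (starRingEnd ℂ) (φ x) - m * (starRingEnd ℂ) m) μ :=
    (i2.const_mul _).sub (integrable_const _)
  rw [hstep]
  simp_rw [hexp]
  rw [integral_sub i4 i5,
    integral_sub i3 (i1.mul_const _), integral_sub (i2.const_mul _) (integrable_const _),
    integral_mul_const, integral_const_mul, inv _ φ hφ_meas, integral_conj, ← hm, integral_const,
    ← Complex.normSq_eq_norm_sq, ← Complex.mul_conj]
  simp

/-- Mean-square bound for the unipotent average of a function with polynomially
decaying autocorrelations: `μ(|φ_L|²) ≤ 14 C (Lλ)^{-c} S²`. -/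
theorem mean_square_unipotent_average {X : Type*} [MeasurableSpace X]
    (μ : Measure X) [IsProbabilityMeasure μ]
    (u : ℝ → X → X)
    (hu_meas : Measurable fun q : ℝ × X => u q.1 q.2)
    (hu_zero : ∀ x, u 0 x = x)
    (hu_add : ∀ s t x, u (s + t) x = u s (u t x))
    (hu_pres : ∀ s, Measure.map (u s) μ = μ)
    (φ : X → ℂ) (hφ_meas : Measurable φ) (hφ_bdd : ∃ K : ℝ, ∀ x, ‖φ x‖ ≤ K)
    (ξ : ℝ → ℂ) (hξ_meas : Measurable ξ) (hξ : ∀ s, ‖ξ s‖ = 1)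
    (C : ℝ) (hC : 1 ≤ C) (c : ℝ) (hc : c ∈ Set.Ioo (0 : ℝ) (1 / 2))
    (lam S : ℝ) (hlam : 0 < lam) (hS : 0 ≤ S)
    (hcorr : ∀ s : ℝ,
      ‖(∫ x, φ (u s x) * (starRingEnd ℂ) (φ x) ∂μ) -
          ((‖∫ x, φ x ∂μ‖ ^ 2 : ℝ) : ℂ)‖ ≤ C * max 1 (|s| * lam) ^ (-c) * S ^ 2)
    (L : ℝ) (hL : 0 < L) (hLlam : 1 ≤ L * lam) :
    ∫ x, ‖(1 / (L : ℂ)) * ∫ s in (0 : ℝ)..L, ξ s * (φ (u s x) - ∫ y, φ y ∂μ)‖ ^ 2 ∂μ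
      ≤ 14 * C * (L * lam) ^ (-c) * S ^ 2 := by
  obtain ⟨K, hK⟩ := hφ_bdd
  have hu : ∀ s, Measurable (u s) := fun s =>
    hu_meas.comp (g := fun q : ℝ × X => u q.1 q.2) (f := fun x => (s, x)) (by fun_prop)
  set m := ∫ y, φ y ∂μ with hm
  set ν : Measure ℝ := volume.restrict (Set.Ioc 0 L) with hν
  have hker := continuous_decay_kernel c lam
  have hG : Integrable (fun z : ℝ × ℝ => C * max 1 (|z.1 - z.2| * lam) ^ (-c) * S ^ 2)
      (ν.prod ν) := by
    have hcont : Continuous fun z : ℝ × ℝ => max 1 (|z.1 - z.2| * lam) ^ (-c) :=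
      hker.comp (g := fun r : ℝ => max 1 (|r| * lam) ^ (-c)) (by fun_prop)
    refine (Integrable.const_mul ?_ C).mul_const _
    refine Integrable.of_bound hcont.aestronglyMeasurable 1 (ae_of_all _ fun z => ?_)
    have h1 : (1 : ℝ) ≤ max 1 (|z.1 - z.2| * lam) := le_max_left _ _
    rw [Real.norm_of_nonneg (Real.rpow_nonneg (zero_le_one.trans h1) _)]
    exact Real.rpow_le_one_of_one_le_of_nonpos h1 (by linarith [hc.1])
  have hmain : ∫ x, ‖∫ s, ξ s * (φ (u s x) - m) ∂ν‖ ^ 2 ∂μ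
      ≤ ∫ t, ∫ s, C * max 1 (|s - t| * lam) ^ (-c) * S ^ 2 ∂ν ∂ν := by
    refine integral_norm_sq_average_le μ ν (fun s x => ξ s * (φ (u s x) - m)) ?_ (K + ‖m‖) ?_
      (fun s t => C * max 1 (|s - t| * lam) ^ (-c) * S ^ 2) hG ?_
    · exact (hξ_meas.comp measurable_fst).mul ((hφ_meas.comp hu_meas).sub_const _)
    · intro s x
      rw [norm_mul, hξ, one_mul]
      exact (norm_sub_le _ _).trans (by gcongr; exact hK _)
    · intro s t
      have hfactor : ∀ x, ξ s * (φ (u s x) - m) * (starRingEnd ℂ) (ξ t * (φ (u t x) - m))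
          = ξ s * (starRingEnd ℂ) (ξ t)
            * ((φ (u s x) - m) * (starRingEnd ℂ) (φ (u t x) - m)) := fun x => by
        rw [map_mul]; ring
      simp_rw [hfactor]
      rw [integral_const_mul, norm_mul, norm_mul, RCLike.norm_conj, hξ, hξ, one_mul, one_mul,
        correlation_centred_translates μ u hu hu_add hu_pres φ hφ_meas K hK s t]
      exact hcorr (s - t)
  have hdouble : ∫ t, ∫ s, C * max 1 (|s - t| * lam) ^ (-c) * S ^ 2 ∂ν ∂ν
      ≤ L * (C * (4 * L * (L * lam) ^ (-c)) * S ^ 2) := by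
    calc ∫ t, ∫ s, C * max 1 (|s - t| * lam) ^ (-c) * S ^ 2 ∂ν ∂ν
        ≤ ∫ _ in Set.Ioc 0 L, C * (4 * L * (L * lam) ^ (-c)) * S ^ 2 := by
          refine setIntegral_mono_on hG.integral_prod_right (integrable_const _)
            measurableSet_Ioc fun t ht => ?_
          rw [integral_mul_const, integral_const_mul, hν,
            ← intervalIntegral.integral_of_le hL.le]
          have := integral_decay_kernel_le hc hlam hL ht
          gcongr
      _ = L * (C * (4 * L * (L * lam) ^ (-c)) * S ^ 2) := by
          rw [setIntegral_const, smul_eq_mul, Real.volume_real_Ioc_of_le hL.le, sub_zero]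
  have hscale : ∀ x, ‖(1 / (L : ℂ)) * ∫ s in (0 : ℝ)..L, ξ s * (φ (u s x) - m)‖ ^ 2
      = (1 / L ^ 2) * ‖∫ s, ξ s * (φ (u s x) - m) ∂ν‖ ^ 2 := fun x => by
    rw [intervalIntegral.integral_of_le hL.le, norm_mul, mul_pow, norm_div, norm_one,
      Complex.norm_real, Real.norm_of_nonneg hL.le, div_pow, one_pow]
  simp_rw [hscale]
  rw [integral_const_mul]
  have hpos : 0 ≤ C * (L * lam) ^ (-c) * S ^ 2 := by positivity
  calc (1 / L ^ 2) * ∫ x, ‖∫ s, ξ s * (φ (u s x) - m) ∂ν‖ ^ 2 ∂μ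
      ≤ (1 / L ^ 2) * (L * (C * (4 * L * (L * lam) ^ (-c)) * S ^ 2)) := by
        gcongr
        exact hmain.trans hdouble
    _ = 4 * (C * (L * lam) ^ (-c) * S ^ 2) := by field_simp
    _ ≤ 14 * C * (L * lam) ^ (-c) * S ^ 2 := by linarith
end

section
/- Let (X, 𝓑, μ) be a probability space, p ≥ 1 an integer, and for each i = 1,…,p let (u^{(i)}_s)_{s∈ℝ} be a jointly measurable measure-preserving ℝ-flow on X. Let φ₁,…,φ_p : X → ℂ be bounded measurable functions, let ξ : ℝ → ℂ be measurable with |ξ(s)| = 1 for all s, and let C ≥ 1, c ∈ (0,1/2), S₁,…,S_p ≥ 0 and λ₁ ≥ λ₂ ≥ ⋯ ≥ λ_p > 0 be constants such that for every i: sup_X |φᵢ| ≤ Sᵢ, and for all s ∈ ℝ, |∫_X φᵢ(u^{(i)}_s x)·conj(φᵢ(x)) dμ(x) − |∫_X φᵢ dμ|²| ≤ C·max(1, |s|·λᵢ)^{−c}·Sᵢ². For L > 0 define ψ̃_L : X^p → ℂ by ψ̃_L(x₁,…,x_p) := (1/L)·∫₀^L ξ(s)·(∏_{i=1}^p φᵢ(u^{(i)}_s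 xᵢ) − ∏_{i=1}^p ∫_X φᵢ dμ) ds. Then for every L > 0 with L·λ_p ≥ 1 one has ∫_{X^p} |ψ̃_L|² d(μ^{⊗p}) ≤ 14·p·C·(L·λ_p)^{−c}·∏_{i=1}^p Sᵢ², where μ^{⊗p} is the p-fold product measure. -/
open MeasureTheory

/-!
Write `ψ̃_L(x) = L⁻¹ ∫₀ᴸ G(s, x) ds`. Expanding the square and exchanging integrals bounds the mean
square by `L⁻² ∬ |∫ G(s, x) conj G(t, x) dx| ds dt` (`integral_norm_sq_le`); the unimodular weight
`ξ` disappears on taking absolute values.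

Since the flows preserve `μ`, the inner integral equals, up to a phase,
`∏ᵢ aᵢ(s - t) - ∏ᵢ |∫ φᵢ|²`, where `aᵢ` is the autocorrelation of `φᵢ`. All factors are at most
`Sᵢ²` in absolute value, so a telescoping argument (`norm_prod_sub_prod_le`) together with the decay
of correlations bounds it by `p C max(1, |s - t| λ_p)^{-c} ∏ Sᵢ²` (`covariance_le`).

Finally `∬ max(1, |s - t| λ)^{-c} ds dt ≤ 4 L² (L λ)^{-c}` (`kernel_double`), because
`r ↦ r^{-c}` is integrable at `0` with `1 / (1 - c) ≤ 2`. This gives the estimate with the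
constant `4`, which is below `14`.
-/

/-- Telescoping estimate for a difference of two products whose factors are pairwise close,
with the errors `D i` measured relative to the common bounds `R i`. -/
lemma norm_prod_sub_prod_le {ι : Type*} (s : Finset ι) (a b : ι → ℂ) (D R : ι → ℝ)
    (ha : ∀ i, ‖a i‖ ≤ R i) (hb : ∀ i, ‖b i‖ ≤ R i) (hab : ∀ i, ‖a i - b i‖ ≤ D i * R i) :
    ‖∏ i ∈ s, a i - ∏ i ∈ s, b i‖ ≤ (∑ i ∈ s, D i) * ∏ i ∈ s, R i := by
  classical
  have hR : ∀ i, 0 ≤ R i := fun i => (norm_nonneg _).trans (ha i)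
  induction s using Finset.induction_on with
  | empty => simp
  | insert j s hj ih =>
    rw [Finset.prod_insert hj, Finset.prod_insert hj, Finset.prod_insert hj, Finset.sum_insert hj]
    have hbs : ‖∏ i ∈ s, b i‖ ≤ ∏ i ∈ s, R i := by
      rw [norm_prod]
      exact Finset.prod_le_prod (fun i _ => norm_nonneg _) (fun i _ => hb i)
    calc ‖a j * ∏ i ∈ s, a i - b j * ∏ i ∈ s, b i‖
        = ‖a j * (∏ i ∈ s, a i - ∏ i ∈ s, b i) + (a j - b j) * ∏ i ∈ s, b i‖ := by
          congr 1; ring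
      _ ≤ ‖a j‖ * ‖∏ i ∈ s, a i - ∏ i ∈ s, b i‖ + ‖a j - b j‖ * ‖∏ i ∈ s, b i‖ := by
          refine (norm_add_le _ _).trans ?_
          rw [norm_mul, norm_mul]
      _ ≤ R j * ((∑ i ∈ s, D i) * ∏ i ∈ s, R i) + (D j * R j) * ∏ i ∈ s, R i := by
          gcongr
          · exact hR j
          · exact ha j
          · exact (norm_nonneg _).trans (hab j)
          · exact hab j
      _ = _ := by ring

/-- The second moment of a time integral is at most the double time integral of the absolute
correlations: `|∫ G ds|²` is written as a double integral and Fubini is applied. -/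
lemma integral_norm_sq_le {T Ω : Type*} [MeasurableSpace T] [MeasurableSpace Ω]
    (ν : Measure T) [IsFiniteMeasure ν] (P : Measure Ω) [IsFiniteMeasure P]
    (G : T → Ω → ℂ) (hG : Measurable fun q : T × Ω => G q.1 q.2) (M : ℝ)
    (hM : ∀ s x, ‖G s x‖ ≤ M) :
    ∫ x, ‖∫ s, G s x ∂ν‖ ^ 2 ∂P ≤
      ∫ z, ‖∫ x, G z.1 x * (starRingEnd ℂ) (G z.2 x) ∂P‖ ∂(ν.prod ν) := by
  have hint : Integrable (fun q : Ω × (T × T) => G q.2.1 q.1 * (starRingEnd ℂ) (G q.2.2 q.1))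
      (P.prod (ν.prod ν)) := by
    refine Integrable.of_bound (C := M * M) (Measurable.aestronglyMeasurable ?_) ?_
    · exact (hG.comp (measurable_snd.fst.prodMk measurable_fst)).mul
        (Complex.continuous_conj.measurable.comp
          (hG.comp (measurable_snd.snd.prodMk measurable_fst)))
    · refine Filter.Eventually.of_forall fun q => ?_
      rw [norm_mul, RCLike.norm_conj]
      exact mul_le_mul (hM _ _) (hM _ _) (norm_nonneg _) ((norm_nonneg _).trans (hM q.2.1 q.1))
  have hsq : ∀ x, ((‖∫ s, G s x ∂ν‖ ^ 2 : ℝ) : ℂ) =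
      ∫ z, G z.1 x * (starRingEnd ℂ) (G z.2 x) ∂(ν.prod ν) := fun x => by
    rw [integral_prod_mul (fun s => G s x) (fun t => (starRingEnd ℂ) (G t x)), integral_conj,
      Complex.mul_conj, Complex.normSq_eq_norm_sq]
  have hnn : 0 ≤ ∫ x, ‖∫ s, G s x ∂ν‖ ^ 2 ∂P := integral_nonneg fun x => by positivity
  calc ∫ x, ‖∫ s, G s x ∂ν‖ ^ 2 ∂P
      = ‖((∫ x, ‖∫ s, G s x ∂ν‖ ^ 2 ∂P : ℝ) : ℂ)‖ := by
        rw [Complex.norm_real, Real.norm_of_nonneg hnn]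
    _ = ‖∫ z, ∫ x, G z.1 x * (starRingEnd ℂ) (G z.2 x) ∂P ∂(ν.prod ν)‖ := by
        rw [← integral_complex_ofReal]
        simp_rw [hsq]
        rw [integral_integral_swap hint]
    _ ≤ _ := norm_integral_le_integral_norm _

lemma measurable_kernel (l c : ℝ) : Measurable fun r : ℝ => max 1 (|r| * l) ^ (-c) := by
  fun_prop

lemma kernel_mem {l c : ℝ} (hc : 0 < c) (r : ℝ) :
    0 ≤ max 1 (|r| * l) ^ (-c) ∧ max 1 (|r| * l) ^ (-c) ≤ 1 :=
  ⟨by positivity, Real.rpow_le_one_of_one_le_of_nonpos (le_max_left _ _) (by linarith)⟩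

lemma kernel_intervalIntegrable {l c : ℝ} (hc : 0 < c) (a b : ℝ) :
    IntervalIntegrable (fun r : ℝ => max 1 (|r| * l) ^ (-c)) volume a b := by
  refine (intervalIntegrable_const (c := (1 : ℝ))).mono_fun
    (measurable_kernel l c).aestronglyMeasurable ?_
  refine Filter.Eventually.of_forall fun r => ?_
  simp only [norm_one]
  rw [Real.norm_of_nonneg (kernel_mem hc r).1]
  exact (kernel_mem hc r).2

/-- Here `max 1 (r l) ^ (-c)` is replaced by `(r l) ^ (-c)`, and `1 / (1 - c) ≤ 2`. -/
lemma kernel_half {l c L : ℝ} (hl : 0 < l) (hc : c ∈ Set.Ioo (0 : ℝ) (1 / 2)) (hL : 0 < L) :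
    ∫ r in (0 : ℝ)..L, max 1 (|r| * l) ^ (-c) ≤ 2 * L * (L * l) ^ (-c) := by
  obtain ⟨hc0, hc1⟩ := hc
  have hi : IntervalIntegrable (fun r : ℝ => r ^ (-c) * l ^ (-c)) volume 0 L :=
    (intervalIntegral.intervalIntegrable_rpow' (by linarith)).mul_const _
  calc ∫ r in (0 : ℝ)..L, max 1 (|r| * l) ^ (-c)
      ≤ ∫ r in (0 : ℝ)..L, r ^ (-c) * l ^ (-c) := by
        refine intervalIntegral.integral_mono_on_of_le_Ioo hL.le
          (kernel_intervalIntegrable hc0 _ _) hi fun r hr => ?_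
        rw [← Real.mul_rpow hr.1.le hl.le, abs_of_pos hr.1]
        exact Real.rpow_le_rpow_of_nonpos (mul_pos hr.1 hl) (le_max_right _ _) (by linarith)
    _ = L ^ (-c) * l ^ (-c) * L / (1 - c) := by
        rw [intervalIntegral.integral_mul_const, integral_rpow (Or.inl (by linarith)),
          Real.zero_rpow (by linarith), Real.rpow_add hL, Real.rpow_one]
        have : -c + 1 = 1 - c := by ring
        rw [this]; ring
    _ ≤ _ := by
        rw [Real.mul_rpow hL.le hl.le, div_le_iff₀ (by linarith)]
        have : 0 ≤ L ^ (-c) * l ^ (-c) * L := by positivity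
        nlinarith

/-- For `s ∈ (0, L]` the difference `s - t` stays in `[-L, L]`, where the even kernel has twice the
mass it has on `[0, L]`. -/
lemma kernel_slice {l c L : ℝ} (hl : 0 < l) (hc : c ∈ Set.Ioo (0 : ℝ) (1 / 2)) (hL : 0 < L)
    {s : ℝ} (hs : s ∈ Set.Ioc 0 L) :
    ∫ t in (0 : ℝ)..L, max 1 (|s - t| * l) ^ (-c) ≤ 4 * L * (L * l) ^ (-c) := by
  have hi := kernel_intervalIntegrable (l := l) hc.1
  rw [intervalIntegral.integral_comp_sub_left (fun r => max 1 (|r| * l) ^ (-c)) s, sub_zero]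
  have hneg : ∫ r in (-L)..0, max 1 (|r| * l) ^ (-c) = ∫ r in (0 : ℝ)..L, max 1 (|r| * l) ^ (-c) := by
    have := intervalIntegral.integral_comp_neg (a := 0) (b := L)
      (fun r => max 1 (|r| * l) ^ (-c))
    simp only [abs_neg, neg_zero] at this
    exact this.symm
  calc ∫ r in (s - L)..s, max 1 (|r| * l) ^ (-c)
      ≤ ∫ r in (-L)..L, max 1 (|r| * l) ^ (-c) := by
        refine intervalIntegral.integral_mono_interval (by linarith [hs.1]) (by linarith) hs.2
          (Filter.Eventually.of_forall fun r => (kernel_mem hc.1 r).1) (hi _ _)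
    _ = (∫ r in (-L)..0, max 1 (|r| * l) ^ (-c)) + ∫ r in (0 : ℝ)..L, max 1 (|r| * l) ^ (-c) :=
        (intervalIntegral.integral_add_adjacent_intervals (hi _ _) (hi _ _)).symm
    _ ≤ _ := by
        rw [hneg]
        linarith [kernel_half hl hc hL]

lemma kernel_integrable {l c : ℝ} (hc : 0 < c) (ν : Measure (ℝ × ℝ)) [IsFiniteMeasure ν] :
    Integrable (fun z : ℝ × ℝ => max 1 (|z.1 - z.2| * l) ^ (-c)) ν := by
  refine Integrable.of_bound (C := 1)
    ((measurable_kernel l c).comp (measurable_fst.sub measurable_snd)).aestronglyMeasurable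
    (Filter.Eventually.of_forall fun z => ?_)
  rw [Real.norm_of_nonneg (kernel_mem hc _).1]
  exact (kernel_mem hc _).2

lemma kernel_double {l c L : ℝ} (hl : 0 < l) (hc : c ∈ Set.Ioo (0 : ℝ) (1 / 2)) (hL : 0 < L) :
    ∫ z : ℝ × ℝ, max 1 (|z.1 - z.2| * l) ^ (-c)
        ∂((volume.restrict (Set.Ioc 0 L)).prod (volume.restrict (Set.Ioc 0 L)))
      ≤ 4 * L ^ 2 * (L * l) ^ (-c) := by
  have hint := kernel_integrable (l := l) hc.1
    ((volume.restrict (Set.Ioc 0 L)).prod (volume.restrict (Set.Ioc 0 L)))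
  rw [integral_prod _ hint]
  calc _ ≤ ∫ s in Set.Ioc 0 L, 4 * L * (L * l) ^ (-c) := by
        refine setIntegral_mono_on hint.integral_prod_left (integrable_const _)
          measurableSet_Ioc fun s hs => ?_
        rw [← intervalIntegral.integral_of_le hL.le]
        exact kernel_slice hl hc hL hs
    _ = _ := by
        simp [hL.le]; ring

/-- The centred product observables at times `s` and `t` have covariance
`∏ aᵢ(s - t) - ∏ |∫ φᵢ|²`, with `aᵢ` the autocorrelation of `φᵢ`, which is small as soon as each
`aᵢ(s - t)` is close to `|∫ φᵢ|²`. -/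
lemma covariance_le {X : Type*} [MeasurableSpace X] (μ : Measure X) [IsProbabilityMeasure μ]
    {p : ℕ} (u : Fin p → ℝ → X → X)
    (hu_meas : ∀ i, Measurable fun q : ℝ × X => u i q.1 q.2)
    (hu_add : ∀ i s t x, u i (s + t) x = u i s (u i t x))
    (hu_pres : ∀ i s, Measure.map (u i s) μ = μ)
    (φ : Fin p → X → ℂ) (hφ_meas : ∀ i, Measurable (φ i))
    (S : Fin p → ℝ) (hφ_bdd : ∀ i x, ‖φ i x‖ ≤ S i) (D : Fin p → ℝ) (s t : ℝ)
    (hcorr : ∀ i,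
      ‖(∫ x, φ i (u i (s - t) x) * (starRingEnd ℂ) (φ i x) ∂μ) -
          ((‖∫ x, φ i x ∂μ‖ ^ 2 : ℝ) : ℂ)‖ ≤ D i * S i ^ 2) :
    ‖∫ x : Fin p → X, ((∏ i, φ i (u i s (x i))) - ∏ i, ∫ y, φ i y ∂μ) *
        (starRingEnd ℂ) ((∏ i, φ i (u i t (x i))) - ∏ i, ∫ y, φ i y ∂μ) ∂(Measure.pi fun _ => μ)‖
      ≤ (∑ i, D i) * ∏ i, S i ^ 2 := by
  have hus : ∀ i s, Measurable (u i s) := fun i s =>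
    (hu_meas i).comp (measurable_const.prodMk measurable_id)
  have hF : ∀ s, Measurable fun x : Fin p → X => ∏ i, φ i (u i s (x i)) := fun s =>
    Finset.measurable_prod _ fun i _ => (hφ_meas i).comp ((hus i s).comp (measurable_pi_apply i))
  have hFb : ∀ s (x : Fin p → X), ‖∏ i, φ i (u i s (x i))‖ ≤ ∏ i, S i := fun s x => by
    rw [norm_prod]
    exact Finset.prod_le_prod (fun i _ => norm_nonneg _) (fun i _ => hφ_bdd i _)
  have hFi : ∀ s, Integrable (fun x : Fin p → X => ∏ i, φ i (u i s (x i)))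
      (Measure.pi fun _ => μ) := fun s =>
    Integrable.of_bound (hF s).aestronglyMeasurable _ (Filter.Eventually.of_forall (hFb s))
  have hmean : ∀ s, ∫ x : Fin p → X, ∏ i, φ i (u i s (x i)) ∂(Measure.pi fun _ => μ)
      = ∏ i, ∫ y, φ i y ∂μ := fun s => by
    rw [integral_fintype_prod_eq_prod (fun i y => φ i (u i s y))]
    refine Finset.prod_congr rfl fun i _ => ?_
    conv_rhs => rw [← hu_pres i s]
    rw [integral_map (hus i s).aemeasurable (hφ_meas i).aestronglyMeasurable]
  have hcov : ∀ i, ∫ x, φ i (u i s x) * (starRingEnd ℂ) (φ i (u i t x)) ∂μ =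
      ∫ x, φ i (u i (s - t) x) * (starRingEnd ℂ) (φ i x) ∂μ := fun i => by
    conv_rhs => rw [← hu_pres i t]
    rw [integral_map (hus i t).aemeasurable]
    · simp_rw [← hu_add, sub_add_cancel]
    · exact (((hφ_meas i).comp (hus i _)).mul
        (Complex.continuous_conj.measurable.comp (hφ_meas i))).aestronglyMeasurable
  set m : ℂ := ∏ i, ∫ y, φ i y ∂μ with hm
  set P : Measure (Fin p → X) := Measure.pi fun _ => μ with hP
  have hprod : Integrable (fun x : Fin p → X =>
      (∏ i, φ i (u i s (x i))) * (starRingEnd ℂ) (∏ i, φ i (u i t (x i)))) P := by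
    refine Integrable.of_bound (C := (∏ i, S i) * ∏ i, S i) ((hF s).mul
      (Complex.continuous_conj.measurable.comp (hF t))).aestronglyMeasurable
      (Filter.Eventually.of_forall fun x => ?_)
    rw [norm_mul, RCLike.norm_conj]
    exact mul_le_mul (hFb s x) (hFb t x) (norm_nonneg _) ((norm_nonneg _).trans (hFb s x))
  have hconj : Integrable (fun x : Fin p → X => (starRingEnd ℂ) (∏ i, φ i (u i t (x i)))) P := by
    refine Integrable.of_bound (C := ∏ i, S i)
      (Complex.continuous_conj.measurable.comp (hF t)).aestronglyMeasurable
      (Filter.Eventually.of_forall fun x => ?_)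
    rw [RCLike.norm_conj]
    exact hFb t x
  have hmain : ∫ x : Fin p → X, ((∏ i, φ i (u i s (x i))) - m) *
        (starRingEnd ℂ) ((∏ i, φ i (u i t (x i))) - m) ∂P =
      (∏ i, ∫ x, φ i (u i (s - t) x) * (starRingEnd ℂ) (φ i x) ∂μ) -
        ∏ i, ((‖∫ x, φ i x ∂μ‖ ^ 2 : ℝ) : ℂ) := by
    have hexp : ∀ x : Fin p → X, ((∏ i, φ i (u i s (x i))) - m) *
        (starRingEnd ℂ) ((∏ i, φ i (u i t (x i))) - m) =
        (∏ i, φ i (u i s (x i))) * (starRingEnd ℂ) (∏ i, φ i (u i t (x i)))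
        - (∏ i, φ i (u i s (x i))) * (starRingEnd ℂ) m
        - m * (starRingEnd ℂ) (∏ i, φ i (u i t (x i))) + m * (starRingEnd ℂ) m := fun x => by
      rw [map_sub]; ring
    simp_rw [hexp]
    have hi₁ : Integrable (fun x : Fin p → X =>
        (∏ i, φ i (u i s (x i))) * (starRingEnd ℂ) (∏ i, φ i (u i t (x i)))
        - (∏ i, φ i (u i s (x i))) * (starRingEnd ℂ) m) P := hprod.sub ((hFi s).mul_const _)
    have hi₂ : Integrable (fun x : Fin p → X =>
        (∏ i, φ i (u i s (x i))) * (starRingEnd ℂ) (∏ i, φ i (u i t (x i)))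
        - (∏ i, φ i (u i s (x i))) * (starRingEnd ℂ) m
        - m * (starRingEnd ℂ) (∏ i, φ i (u i t (x i)))) P := hi₁.sub (hconj.const_mul _)
    rw [integral_add hi₂ (integrable_const _), integral_sub hi₁ (hconj.const_mul _),
      integral_sub hprod ((hFi s).mul_const _), integral_mul_const, integral_const_mul,
      integral_conj, hmean, hmean, integral_const]
    have h1 : ∫ x : Fin p → X,
        (∏ i, φ i (u i s (x i))) * (starRingEnd ℂ) (∏ i, φ i (u i t (x i))) ∂P =
        ∏ i, ∫ x, φ i (u i (s - t) x) * (starRingEnd ℂ) (φ i x) ∂μ := by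
      simp_rw [map_prod, ← Finset.prod_mul_distrib]
      rw [hP, integral_fintype_prod_eq_prod
        (fun i y => φ i (u i s y) * (starRingEnd ℂ) (φ i (u i t y)))]
      exact Finset.prod_congr rfl fun i _ => hcov i
    have h2 : m * (starRingEnd ℂ) m = ∏ i, ((‖∫ x, φ i x ∂μ‖ ^ 2 : ℝ) : ℂ) := by
      rw [hm, map_prod, ← Finset.prod_mul_distrib]
      refine Finset.prod_congr rfl fun i _ => ?_
      rw [Complex.mul_conj, Complex.normSq_eq_norm_sq]
    rw [h1, h2]
    simp
  rw [hmain]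
  refine norm_prod_sub_prod_le _ _ _ _ _ (fun i => ?_) (fun i => ?_) hcorr
  · refine (norm_integral_le_of_norm_le_const (C := S i ^ 2)
      (Filter.Eventually.of_forall fun x => ?_)).trans (by simp)
    rw [norm_mul, RCLike.norm_conj, sq]
    exact mul_le_mul (hφ_bdd i _) (hφ_bdd i _) (norm_nonneg _)
      ((norm_nonneg _).trans (hφ_bdd i x))
  · rw [Complex.norm_real, Real.norm_of_nonneg (by positivity)]
    gcongr
    exact (norm_integral_le_of_norm_le_const
      (Filter.Eventually.of_forall (hφ_bdd i))).trans (by simp)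

/-- The product-measure mean-square estimate
`μ^{⊗p}(|ψ̃_L|²) ≤ 14 p C (L λ_p)^{-c} ∏ Sᵢ²`. -/
theorem product_mean_square_estimate {X : Type*} [MeasurableSpace X]
    (μ : Measure X) [IsProbabilityMeasure μ]
    (p : ℕ) (hp : 1 ≤ p)
    (u : Fin p → ℝ → X → X)
    (hu_meas : ∀ i, Measurable fun q : ℝ × X => u i q.1 q.2)
    (hu_zero : ∀ i x, u i 0 x = x)
    (hu_add : ∀ i s t x, u i (s + t) x = u i s (u i t x))
    (hu_pres : ∀ i s, Measure.map (u i s) μ = μ)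
    (φ : Fin p → X → ℂ) (hφ_meas : ∀ i, Measurable (φ i))
    (ξ : ℝ → ℂ) (hξ_meas : Measurable ξ) (hξ : ∀ s, ‖ξ s‖ = 1)
    (C : ℝ) (hC : 1 ≤ C) (c : ℝ) (hc : c ∈ Set.Ioo (0 : ℝ) (1 / 2))
    (S : Fin p → ℝ) (hS : ∀ i, 0 ≤ S i)
    (lam : Fin p → ℝ)
    (hlam_mono : ∀ i j : Fin p, i ≤ j → lam j ≤ lam i)
    (hlam_pos : 0 < lam ⟨p - 1, by omega⟩)
    (hφ_bdd : ∀ i x, ‖φ i x‖ ≤ S i)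
    (hcorr : ∀ i, ∀ s : ℝ,
      ‖(∫ x, φ i (u i s x) * (starRingEnd ℂ) (φ i x) ∂μ) -
          ((‖∫ x, φ i x ∂μ‖ ^ 2 : ℝ) : ℂ)‖ ≤ C * max 1 (|s| * lam i) ^ (-c) * S i ^ 2)
    (L : ℝ) (hL : 0 < L) (hLlam : 1 ≤ L * lam ⟨p - 1, by omega⟩) :
    ∫ x : Fin p → X,
        ‖(1 / (L : ℂ)) * ∫ s in (0 : ℝ)..L,
            ξ s * ((∏ i, φ i (u i s (x i))) - ∏ i, ∫ y, φ i y ∂μ)‖ ^ 2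
        ∂(Measure.pi fun _ => μ)
      ≤ 14 * p * C * (L * lam ⟨p - 1, by omega⟩) ^ (-c) * ∏ i, S i ^ 2 := by
  set l : ℝ := lam ⟨p - 1, by omega⟩ with hl
  set ν : Measure ℝ := volume.restrict (Set.Ioc 0 L) with hν
  set m : ℂ := ∏ i, ∫ y, φ i y ∂μ with hm
  set G : ℝ → (Fin p → X) → ℂ := fun s x => ξ s * ((∏ i, φ i (u i s (x i))) - m) with hG
  have hGmeas : Measurable fun q : ℝ × (Fin p → X) => G q.1 q.2 := by
    refine (hξ_meas.comp measurable_fst).mul (Measurable.sub_const ?_ _)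
    refine Finset.measurable_prod _ fun i _ => (hφ_meas i).comp ?_
    exact (hu_meas i).comp
      (measurable_fst.prodMk ((measurable_pi_apply i).comp measurable_snd))
  have hGb : ∀ s x, ‖G s x‖ ≤ ∏ i, S i + ‖m‖ := fun s x => by
    rw [hG, norm_mul, hξ, one_mul]
    refine (norm_sub_le _ _).trans (add_le_add_left ?_ _)
    rw [norm_prod]
    exact Finset.prod_le_prod (fun i _ => norm_nonneg _) (fun i _ => hφ_bdd i _)
  have hR : 0 ≤ ∏ i, S i ^ 2 := Finset.prod_nonneg fun i _ => sq_nonneg _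
  have hcov : ∀ z : ℝ × ℝ,
      ‖∫ x, G z.1 x * (starRingEnd ℂ) (G z.2 x) ∂(Measure.pi fun _ : Fin p => μ)‖ ≤
        p * C * (∏ i, S i ^ 2) * max 1 (|z.1 - z.2| * l) ^ (-c) := fun z => by
    have hfac : ∀ x, G z.1 x * (starRingEnd ℂ) (G z.2 x) = ξ z.1 * (starRingEnd ℂ) (ξ z.2) *
        (((∏ i, φ i (u i z.1 (x i))) - m) *
          (starRingEnd ℂ) ((∏ i, φ i (u i z.2 (x i))) - m)) := fun x => by
      simp only [hG, map_mul]; ring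
    simp_rw [hfac]
    rw [integral_const_mul, norm_mul, norm_mul, RCLike.norm_conj, hξ, hξ, one_mul, one_mul]
    refine (covariance_le μ u hu_meas hu_add hu_pres φ hφ_meas S hφ_bdd
      (fun _ => C * max 1 (|z.1 - z.2| * l) ^ (-c)) z.1 z.2 fun i => ?_).trans (le_of_eq ?_)
    · refine (hcorr i _).trans ?_
      have hli : l ≤ lam i := hlam_mono _ _ (Fin.le_def.2 (by simp; omega))
      gcongr ?_ * _
      gcongr C * ?_
      refine Real.rpow_le_rpow_of_nonpos (by positivity) ?_ (by linarith [hc.1])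
      gcongr
    · simp; ring
  have hkey : ∫ x, ‖∫ s, G s x ∂ν‖ ^ 2 ∂(Measure.pi fun _ : Fin p => μ) ≤
      p * C * (∏ i, S i ^ 2) * (4 * L ^ 2 * (L * l) ^ (-c)) := by
    refine (integral_norm_sq_le ν _ G hGmeas _ hGb).trans ?_
    refine (integral_mono_of_nonneg (Filter.Eventually.of_forall fun z => norm_nonneg _)
      ((kernel_integrable hc.1 _).const_mul _) (Filter.Eventually.of_forall hcov)).trans ?_
    rw [integral_const_mul]
    gcongr
    exact kernel_double hlam_pos hc hL
  have hpull : ∀ x, ‖(1 / (L : ℂ)) * ∫ s in (0 : ℝ)..L, G s x‖ ^ 2 =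
      (L ^ 2)⁻¹ * ‖∫ s, G s x ∂ν‖ ^ 2 := fun x => by
    rw [intervalIntegral.integral_of_le hL.le, norm_mul, mul_pow, ← hν]
    simp
  change ∫ x : Fin p → X, ‖(1 / (L : ℂ)) * ∫ s in (0 : ℝ)..L, G s x‖ ^ 2
    ∂(Measure.pi fun _ => μ) ≤ _
  simp_rw [hpull]
  rw [integral_const_mul, inv_mul_le_iff₀ (by positivity)]
  refine hkey.trans ?_
  have : 0 ≤ p * C * (∏ i, S i ^ 2) * (L ^ 2 * (L * l) ^ (-c)) := by positivity
  nlinarith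
end

section
/- Let r ≥ 2 be an integer and θ ∈ (0,1) a real number. Let β₁ ≥ β₂ ≥ ⋯ ≥ β_r ≥ 0 be real numbers with β₁ > 0 and β_r ≤ β₁·θ. Then there exist an integer p with 1 ≤ p ≤ r−1 and a real number L > 0 such that L·β₁ ≤ θ^{−1}, L·β_p ≥ θ^{−1/(2r)} > 1, and L·β_{p+1} < θ^{1/(2r)}. -/
/-!
Put `s = θ ^ (1 / (2r))`, so `θ = s ^ (2r)`, and let `p` be the first index with
`β (p + 1) < s ^ 2 * β p`. Such a `p ≤ r - 1` exists: otherwise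
`β r ≥ s ^ (2 (r - 1)) * β 1 > θ * β 1`. Normalising `L` by `L * β p = s⁻¹` gives
`L * β (p + 1) < s`, and minimality of `p` gives `β p ≥ s ^ (2 (p - 1)) * β 1`, which bounds
`L * β 1` by `s ^ (-(2p - 1)) ≤ θ⁻¹`. Thus pigeonholing on the successive ratios replaces
pigeonholing on the values `β i / β 1`.
-/

/-- Choice of splitting index `p` and averaging length `L` from the
Pigeon-Hole lemma. -/
theorem splitting_index_and_length (r : ℕ) (hr : 2 ≤ r) (θ : ℝ)
    (hθ : θ ∈ Set.Ioo (0 : ℝ) 1)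
    (β : ℕ → ℝ)
    (hnonneg : ∀ i, 1 ≤ i → i ≤ r → 0 ≤ β i)
    (hpos : 0 < β 1)
    (hmono : ∀ i, 1 ≤ i → i < r → β (i + 1) ≤ β i)
    (hlast : β r ≤ β 1 * θ) :
    ∃ (p : ℕ) (L : ℝ), 1 ≤ p ∧ p ≤ r - 1 ∧ 0 < L ∧
      L * β 1 ≤ θ ^ (-1 : ℝ) ∧
      θ ^ (-(1 : ℝ) / (2 * (r : ℝ))) ≤ L * β p ∧
      1 < θ ^ (-(1 : ℝ) / (2 * (r : ℝ))) ∧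
      L * β (p + 1) < θ ^ ((1 : ℝ) / (2 * (r : ℝ))) := by
  obtain ⟨h0, h1⟩ := hθ
  have hr0 : (0 : ℝ) < r := by
    exact_mod_cast (by omega : 0 < r)
  obtain ⟨s, hs⟩ : ∃ s, s = θ ^ ((1 : ℝ) / (2 * (r : ℝ))) := ⟨_, rfl⟩
  have hs0 : 0 < s := hs ▸ Real.rpow_pos_of_pos h0 _
  have hs1 : s < 1 := hs ▸ Real.rpow_lt_one h0.le h1 (by positivity)
  have hθs : θ = s ^ (2 * r) := by
    rw [hs, ← Real.rpow_natCast, ← Real.rpow_mul h0.le]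
    have : (1 : ℝ) / (2 * (r : ℝ)) * ((2 * r : ℕ) : ℝ) = 1 := by
      push_cast
      field_simp
    rw [this, Real.rpow_one]
  rw [Real.rpow_neg_one, neg_div, Real.rpow_neg h0.le, ← hs]
  by_contra hcon
  have key : ∀ k : ℕ, k + 1 ≤ r → s ^ (2 * k) * β 1 ≤ β (k + 1) := by
    intro k
    induction k with
    | zero => intro _; simp
    | succ k ih =>
      intro hk
      have ihk := ih (by omega)
      have hp : 0 < β (k + 1) := lt_of_lt_of_le (by positivity) ihk
      by_contra hlt
      have hdrop : β (k + 1 + 1) < s ^ 2 * β (k + 1) := by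
        refine lt_of_lt_of_le (not_le.mp hlt) ?_
        calc s ^ (2 * (k + 1)) * β 1 = s ^ 2 * (s ^ (2 * k) * β 1) := by ring
          _ ≤ _ := by gcongr
      -- `k + 1` is the first index with a large drop, so it is the splitting index.
      refine hcon ⟨k + 1, (s * β (k + 1))⁻¹, by omega, by omega, by positivity,
        ?_, ?_, ?_, ?_⟩
      · rw [inv_mul_le_iff₀ (by positivity), hθs, ← div_eq_mul_inv,
          le_div_iff₀ (by positivity)]
        calc β 1 * s ^ (2 * r) ≤ β 1 * s ^ (2 * k + 1) :=
              mul_le_mul_of_nonneg_left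
                (pow_le_pow_of_le_one hs0.le hs1.le (by omega)) hpos.le
          _ = s * (s ^ (2 * k) * β 1) := by ring
          _ ≤ _ := by gcongr
      · apply le_of_eq
        field_simp
      · exact (one_lt_inv₀ hs0).mpr hs1
      · rw [inv_mul_lt_iff₀ (by positivity)]
        calc _ < s ^ 2 * β (k + 1) := hdrop
          _ = _ := by ring
  have hend := key (r - 1) (by omega)
  rw [show r - 1 + 1 = r by omega] at hend
  have hlt : s ^ (2 * r) < s ^ (2 * (r - 1)) :=
    pow_lt_pow_right_of_lt_one₀ hs0 hs1 (by omega)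
  rw [← hθs] at hlt
  have := mul_lt_mul_of_pos_right hlt hpos
  linarith
end

section
/- For every real number R ≥ 1 and every c ∈ (0,1): (1/R²)·∫₀^R ∫₀^R max(1, |u − v|)^{−c} du dv ≤ 7·R^{−c}/(1 − c). -/
/-!
The inner integral, split at `v = u` and translated, becomes the sum of two integrals
`∫₀^a max(1, |t|)^{-c} dt` with `a = u` and `a = R - u`. Since `max(1, |t|) ≥ t`, each is at most
`∫₀^a t^{-c} dt = a^{1-c}/(1-c) ≤ R^{1-c}/(1-c)`. Integrating this uniform bound over `u ∈ [0, R]`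
gives the estimate even with the constant `2` in place of `7`.
-/

lemma continuous_max_one_abs_rpow (c : ℝ) : Continuous fun t : ℝ => max 1 |t| ^ (-c) :=
  (continuous_const.max continuous_abs).rpow_const fun t =>
    Or.inl (lt_of_lt_of_le one_pos (le_max_left 1 |t|)).ne'

lemma integral_max_one_abs_rpow_le {R c a : ℝ} (hc0 : 0 < c) (hc1 : c < 1) (ha : 0 ≤ a)
    (haR : a ≤ R) : ∫ t in (0 : ℝ)..a, max 1 |t| ^ (-c) ≤ R ^ (1 - c) / (1 - c) := by
  have h1c : 0 < 1 - c := by linarith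
  -- The comparison holds only on the open interval: `0 ^ (-c)` is `0` by convention.
  have hle : ∫ t in (0 : ℝ)..a, max 1 |t| ^ (-c) ≤ ∫ t in (0 : ℝ)..a, t ^ (-c) := by
    refine intervalIntegral.integral_mono_on_of_le_Ioo ha
      ((continuous_max_one_abs_rpow c).intervalIntegrable _ _)
      (intervalIntegral.intervalIntegrable_rpow' (by linarith)) fun t ht => ?_
    exact Real.rpow_le_rpow_of_nonpos ht.1 ((le_abs_self t).trans (le_max_right _ _))
      (by linarith)
  rw [integral_rpow (Or.inl (by linarith)), show -c + 1 = 1 - c by ring,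
    Real.zero_rpow h1c.ne', sub_zero] at hle
  exact hle.trans (by gcongr)

lemma inner_integral_le {R c u : ℝ} (hc0 : 0 < c) (hc1 : c < 1) (hu : 0 ≤ u) (huR : u ≤ R) :
    ∫ v in (0 : ℝ)..R, max 1 |u - v| ^ (-c) ≤ 2 * (R ^ (1 - c) / (1 - c)) := by
  have hcont : Continuous fun v : ℝ => max 1 |u - v| ^ (-c) :=
    (continuous_max_one_abs_rpow c).comp (continuous_const.sub continuous_id)
  have hleft : ∫ v in (0 : ℝ)..u, max 1 |u - v| ^ (-c) = ∫ t in (0 : ℝ)..u, max 1 |t| ^ (-c) := by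
    rw [intervalIntegral.integral_comp_sub_left (fun t => max 1 |t| ^ (-c)) u]
    simp
  have hright : ∫ v in u..R, max 1 |u - v| ^ (-c)
      = ∫ t in (0 : ℝ)..(R - u), max 1 |t| ^ (-c) := by
    simp_rw [abs_sub_comm u]
    rw [intervalIntegral.integral_comp_sub_right (fun t => max 1 |t| ^ (-c)) u]
    simp
  rw [← intervalIntegral.integral_add_adjacent_intervals (hcont.intervalIntegrable 0 u)
    (hcont.intervalIntegrable u R), hleft, hright, two_mul]
  exact add_le_add (integral_max_one_abs_rpow_le hc0 hc1 hu huR)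
    (integral_max_one_abs_rpow_le hc0 hc1 (by linarith) (by linarith))

/-- The integral estimate
`(1/R²)∫₀^R∫₀^R max(1,|u−v|)^{−c} du dv ≤ 7 R^{−c}/(1−c)`. -/
theorem double_integral_estimate (R : ℝ) (hR : 1 ≤ R) (c : ℝ)
    (hc : c ∈ Set.Ioo (0 : ℝ) 1) :
    (1 / R ^ 2) * ∫ u in (0 : ℝ)..R, ∫ v in (0 : ℝ)..R, max 1 |u - v| ^ (-c)
      ≤ 7 * R ^ (-c) / (1 - c) := by
  obtain ⟨hc0, hc1⟩ := hc
  have hR0 : 0 < R := by linarith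
  have h1c : 0 < 1 - c := by linarith
  -- Bounding through the norm requires no integrability of the inner integral in `u`.
  have houter : ‖∫ u in (0 : ℝ)..R, ∫ v in (0 : ℝ)..R, max 1 |u - v| ^ (-c)‖
      ≤ 2 * (R ^ (1 - c) / (1 - c)) * |R - 0| := by
    refine intervalIntegral.norm_integral_le_of_norm_le_const fun u hu => ?_
    rw [Set.uIoc_of_le hR0.le] at hu
    rw [Real.norm_of_nonneg (intervalIntegral.integral_nonneg hR0.le fun v _ => by positivity)]
    exact inner_integral_le hc0 hc1 hu.1.le hu.2
  rw [sub_zero, abs_of_pos hR0] at houter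
  have hpow : R ^ (1 - c) = R * R ^ (-c) := by
    rw [sub_eq_add_neg, Real.rpow_add hR0, Real.rpow_one]
  calc (1 / R ^ 2) * ∫ u in (0 : ℝ)..R, ∫ v in (0 : ℝ)..R, max 1 |u - v| ^ (-c)
      ≤ (1 / R ^ 2) * (2 * (R ^ (1 - c) / (1 - c)) * R) := by
        gcongr
        exact (Real.le_norm_self _).trans houter
    _ = 2 * R ^ (-c) / (1 - c) := by
        rw [hpow]
        field_simp
    _ ≤ 7 * R ^ (-c) / (1 - c) := by
        gcongr
        norm_num
end

section
/- Let c₁ ∈ (0,1], ℓ ≥ 1 and d₀ ≥ 1 be real numbers, and let δ : ℕ → ℝ satisfy δ(1) ∈ (0,1] and, for all integers r ≥ 2, δ(r) = c₁·δ(r−1)/(2c₁ + 2ℓ(r+1)d₀r²). Then there exists a real number λ > 1 such that δ(r) ≥ 1/((r!)²·(r+1)!·λ^r) for every integer r ≥ 1. -/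
/-!
With `lam = 4ℓd₀/c₁ + 1/δ₁`, the denominator of the recursion is at most `c₁ · lam · (r+1)r²`,
because `2c₁ ≤ 2 ≤ 2ℓd₀(r+1)r²`. Hence `δ_r ≥ δ_{r-1} / (r²(r+1)lam)`, and `r²(r+1)lam` is exactly
the ratio of consecutive values of `(r!)²(r+1)!lam^r`. The summand `1/δ₁` in `lam` handles the
base case `r = 1`.
-/

/-- Explicit lower bound `δ_r ≥ 1/((r!)²(r+1)!λ^r)` for the exponents produced
by the recursion `δ_r = c₁ δ_{r−1}/(2c₁ + 2ℓ(r+1)d₀r²)`. -/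
theorem delta_recursion_lower_bound (c₁ ℓ d₀ : ℝ)
    (hc₁ : c₁ ∈ Set.Ioc (0 : ℝ) 1) (hℓ : 1 ≤ ℓ) (hd₀ : 1 ≤ d₀)
    (δ : ℕ → ℝ) (hδ1 : δ 1 ∈ Set.Ioc (0 : ℝ) 1)
    (hrec : ∀ r : ℕ, 2 ≤ r →
      δ r = c₁ * δ (r - 1) / (2 * c₁ + 2 * ℓ * ((r : ℝ) + 1) * d₀ * (r : ℝ) ^ 2)) :
    ∃ lam : ℝ, 1 < lam ∧ ∀ r : ℕ, 1 ≤ r →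
      1 / (((r.factorial : ℝ)) ^ 2 * ((r + 1).factorial : ℝ) * lam ^ r) ≤ δ r := by
  obtain ⟨hc0, hc1⟩ := hc₁
  obtain ⟨hδ0, hδle⟩ := hδ1
  have hld : 1 ≤ ℓ * d₀ := one_le_mul_of_one_le_of_one_le hℓ hd₀
  have hinv : 1 ≤ 1 / δ 1 := by rwa [le_div_iff₀ hδ0, one_mul]
  have hq : 0 < 4 * (ℓ * d₀) / c₁ := by positivity
  obtain ⟨lam, hlam⟩ : ∃ lam, lam = 4 * (ℓ * d₀) / c₁ + 1 / δ 1 := ⟨_, rfl⟩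
  have hlam1 : 1 < lam := by linarith
  have hlam0 : 0 < lam := by linarith
  have hclam : 4 * (ℓ * d₀) ≤ c₁ * lam := by
    have h : 4 * (ℓ * d₀) / c₁ ≤ lam := by linarith
    rw [div_le_iff₀ hc0] at h
    linarith
  refine ⟨lam, hlam1, fun r hr => ?_⟩
  induction r, hr using Nat.le_induction with
  | base =>
    have h : 1 / δ 1 ≤ lam := by linarith
    rw [div_le_iff₀ hδ0] at h
    rw [div_le_iff₀ (by positivity)]
    norm_num [Nat.factorial]
    nlinarith
  | succ n hn ih =>
    rw [hrec (n + 1) (by omega), Nat.add_sub_cancel]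
    set x : ℝ := ((n + 1 : ℕ) : ℝ) with hx
    have hx1 : 1 ≤ x := by rw [hx]; exact_mod_cast Nat.le_add_left 1 n
    have hK : 1 ≤ (x + 1) * x ^ 2 :=
      one_le_mul_of_one_le_of_one_le (by linarith) (one_le_pow₀ hx1)
    have hD0 : 0 < 2 * c₁ + 2 * ℓ * (x + 1) * d₀ * x ^ 2 := by positivity
    have hD : 2 * c₁ + 2 * ℓ * (x + 1) * d₀ * x ^ 2 ≤ c₁ * (lam * ((x + 1) * x ^ 2)) := by
      have h1 : 1 ≤ (ℓ * d₀) * ((x + 1) * x ^ 2) := one_le_mul_of_one_le_of_one_le hld hK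
      have h2 := mul_le_mul_of_nonneg_right hclam (zero_le_one.trans hK)
      linarith
    have hfac : ((n + 1).factorial : ℝ) ^ 2 * ((n + 1 + 1).factorial : ℝ) * lam ^ (n + 1)
        = ((n.factorial : ℝ) ^ 2 * ((n + 1).factorial : ℝ) * lam ^ n)
          * (lam * ((x + 1) * x ^ 2)) := by
      rw [Nat.factorial_succ (n + 1), Nat.factorial_succ n, hx]
      push_cast
      ring
    have hA : 0 < (n.factorial : ℝ) ^ 2 * ((n + 1).factorial : ℝ) * lam ^ n := by positivity
    rw [hfac]
    rw [div_le_iff₀ hA] at ih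
    rw [div_le_div_iff₀ (by positivity) hD0, one_mul]
    calc _ ≤ c₁ * (lam * ((x + 1) * x ^ 2)) * 1 := by rw [mul_one]; exact hD
      _ ≤ c₁ * (lam * ((x + 1) * x ^ 2))
          * (δ n * ((n.factorial : ℝ) ^ 2 * ((n + 1).factorial : ℝ) * lam ^ n)) :=
        mul_le_mul_of_nonneg_left ih (by positivity)
      _ = _ := by ring
end
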